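/- arXiv:2601.18511 — 5 statements merged into one kernel-verified Lean document; each statement's English description precedes it below -/
import Mathlib

section
/- (JKLS matrix-multiplication identity) For every positive integer d and all matrices A, B ∈ ℝ^{d×d} (indices modulo d), the product C = A·B satisfies C = Σ_{k=0}^{d-1} Rot_col^k(σ(A)) ⊙ Rot_row^k(τ(B)), where ⊙ denotes the entrywise (Hadamard) product. -/
/-- Row rotation: `(RotRow k M) i j = M (i+k) j`, indices modulo `d`. -/
def RotRow (d : ℕ) (k : ℤ) (M : Matrix (ZMod d) (ZMod d) ℝ) :
    Matrix (ZMod d) (ZMod d) ℝ :=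
  fun i j => M (i + (k : ZMod d)) j

/-- Column rotation: `(RotCol k M) i j = M i (j+k)`, indices modulo `d`. -/
def RotCol (d : ℕ) (k : ℤ) (M : Matrix (ZMod d) (ZMod d) ℝ) :
    Matrix (ZMod d) (ZMod d) ℝ :=
  fun i j => M i (j + (k : ZMod d))

/-- The permutation `τ`: `(tau M) i j = M (i+j) j`, indices modulo `d`. -/
def tau (d : ℕ) (M : Matrix (ZMod d) (ZMod d) ℝ) :
    Matrix (ZMod d) (ZMod d) ℝ :=
  fun i j => M (i + j) j

/-- The permutation `σ`: `(sigma M) i j = M i (i+j)`, indices modulo `d`. -/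
def sigma (d : ℕ) (M : Matrix (ZMod d) (ZMod d) ℝ) :
    Matrix (ZMod d) (ZMod d) ℝ :=
  fun i j => M i (i + j)

/-- The JKLS matrix-multiplication identity:
`A·B = Σ_{k=0}^{d-1} Rot_col^k(σ(A)) ⊙ Rot_row^k(τ(B))`. -/
theorem jkls_identity (d : ℕ) [NeZero d] (A B : Matrix (ZMod d) (ZMod d) ℝ) :
    A * B = ∑ k ∈ Finset.range d,
      Matrix.hadamard (RotCol d (k : ℤ) (sigma d A)) (RotRow d (k : ℤ) (tau d B)) := by
  ext i j
  rw [Matrix.mul_apply, Matrix.sum_apply]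
  symm
  refine Finset.sum_bij (fun k _ => i + (j + (k : ZMod d))) (fun _ _ => Finset.mem_univ _) ?_ ?_ ?_
  · intro a ha b hb h
    have h2 : (a : ZMod d) = (b : ZMod d) := add_left_cancel (add_left_cancel h)
    rw [ZMod.natCast_eq_natCast_iff'] at h2
    rwa [Nat.mod_eq_of_lt (Finset.mem_range.mp ha), Nat.mod_eq_of_lt (Finset.mem_range.mp hb)] at h2
  · intro l _
    refine ⟨(l - i - j).val, Finset.mem_range.mpr (ZMod.val_lt _), ?_⟩
    rw [ZMod.natCast_zmod_val]
    ring
  · intro k _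
    have h : i + (k : ZMod d) + j = i + (j + (k : ZMod d)) := by ring
    simp only [Matrix.hadamard_apply, RotCol, RotRow, sigma, tau, Int.cast_natCast, h]
end

section
/- (Depth-optimized PCMM identity) For every positive integer d, every integer ℓ ≥ 0, and all matrices A, B ∈ ℝ^{d×d} (indices modulo d), the product C = A·B satisfies τ^ℓ(C) = Σ_{k=0}^{d-1} (Rot_row^{-ℓ·k}(Rot_col^k(τ^ℓ(σ(A))))) ⊙ (Rot_row^k(τ^{ℓ+1}(B))), where τ^ℓ denotes the ℓ-fold iterate of τ and ⊙ the entrywise (Hadamard) product. -/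
theorem tau_iterate_apply (d n : ℕ) (M : Matrix (ZMod d) (ZMod d) ℝ) (i j : ZMod d) :
    (tau d)^[n] M i j = M (i + n * j) j := by
  induction n generalizing M with
  | zero => simp
  | succ n ih =>
    rw [Function.iterate_succ_apply, ih]
    simp only [tau]
    congr 1
    push_cast
    ring

theorem sum_range_zmod (d : ℕ) [NeZero d] (f : ZMod d → ℝ) :
    ∑ k ∈ Finset.range d, f (k : ZMod d) = ∑ x : ZMod d, f x := by
  refine Finset.sum_bij (fun k _ => (k : ZMod d)) (fun _ _ => Finset.mem_univ _) ?_ ?_ ?_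
  · intro a ha b hb h
    have h2 := congrArg ZMod.val h
    simpa [ZMod.val_cast_of_lt (Finset.mem_range.1 ha),
      ZMod.val_cast_of_lt (Finset.mem_range.1 hb)] using h2
  · intro b _
    exact ⟨b.val, Finset.mem_range.2 (ZMod.val_lt b), ZMod.natCast_zmod_val b⟩
  · intro _ _
    rfl

/-- The depth-optimized PCMM identity:
`τ^ℓ(A·B) = Σ_{k=0}^{d-1} Rot_row^{-ℓk}(Rot_col^k(τ^ℓ(σ(A)))) ⊙ Rot_row^k(τ^{ℓ+1}(B))`. -/
theorem depth_optimized_pcmm (d : ℕ) [NeZero d] (ℓ : ℕ)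
    (A B : Matrix (ZMod d) (ZMod d) ℝ) :
    (tau d)^[ℓ] (A * B) = ∑ k ∈ Finset.range d,
      Matrix.hadamard
        (RotRow d (-((ℓ : ℤ) * k)) (RotCol d (k : ℤ) ((tau d)^[ℓ] (sigma d A))))
        (RotRow d (k : ℤ) ((tau d)^[ℓ + 1] B)) := by
  ext i j
  rw [tau_iterate_apply, Matrix.sum_apply, Matrix.mul_apply,
    ← Equiv.sum_comp (Equiv.addLeft (i + ℓ * j + j)), ← sum_range_zmod]
  refine Finset.sum_congr rfl fun k _ => ?_
  simp only [Matrix.hadamard_apply, RotRow, RotCol, tau_iterate_apply, sigma, Equiv.coe_addLeft]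
  push_cast
  congr 2 <;> ring
end

section
/- (BSGS form of the depth-optimized PCMM) Let d > 0 and let g, b be positive integers with g·b = d. For every integer ℓ ≥ 0 and all matrices A, B ∈ ℝ^{d×d} (indices modulo d), the product C = A·B satisfies τ^ℓ(C) = Σ_{j=0}^{g-1} Rot_row^{j·b}( Σ_{i=0}^{b-1} A_{i,j,ℓ} ⊙ Rot_row^i(τ^{ℓ+1}(B)) ), where A_{i,j,ℓ} = Rot_row^{-ℓ·(i+j·b) - j·b}(Rot_col^{i+j·b}(τ^ℓ(σ(A)))). -/
/-- The rearranged plaintext matrix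
`A_{i,j,ℓ} = Rot_row^{-ℓ(i+jb)-jb}(Rot_col^{i+jb}(τ^ℓ(σ(A))))`. -/
def ptA (d b : ℕ) (A : Matrix (ZMod d) (ZMod d) ℝ) (i j ℓ : ℕ) :
    Matrix (ZMod d) (ZMod d) ℝ :=
  RotRow d (-((ℓ : ℤ) * ((i : ℤ) + (j : ℤ) * b)) - (j : ℤ) * b)
    (RotCol d ((i : ℤ) + (j : ℤ) * b) ((tau d)^[ℓ] (sigma d A)))

theorem tau_iter (d ℓ : ℕ) (M : Matrix (ZMod d) (ZMod d) ℝ) (r c : ZMod d) :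
    ((tau d)^[ℓ] M) r c = M (r + ℓ * c) c := by
  induction ℓ generalizing M with
  | zero => simp
  | succ n ih =>
    rw [Function.iterate_succ_apply, ih]
    simp only [tau]
    congr 1
    push_cast
    ring

theorem sum_block (f : ℕ → ℝ) (g b : ℕ) :
    ∑ j ∈ Finset.range g, ∑ i ∈ Finset.range b, f (i + j * b)
      = ∑ s ∈ Finset.range (g * b), f s := by
  induction g with
  | zero => simp
  | succ n ih =>
    rw [Finset.sum_range_succ, ih, Nat.succ_mul, Finset.sum_range_add]
    congr 1
    exact Finset.sum_congr rfl fun i _ => by rw [add_comm]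

theorem sum_zmod (d : ℕ) [NeZero d] (f : ZMod d → ℝ) :
    ∑ s ∈ Finset.range d, f (s : ZMod d) = ∑ k, f k := by
  refine Finset.sum_bij' (fun s _ => (s : ZMod d)) (fun k _ => k.val) ?_ ?_ ?_ ?_ ?_
  · simp
  · intro k _
    simpa using ZMod.val_lt k
  · intro s hs
    exact ZMod.val_cast_of_lt (Finset.mem_range.mp hs)
  · intro k _
    exact ZMod.natCast_zmod_val k
  · simp

/-- The BSGS form of the depth-optimized PCMM:
`τ^ℓ(A·B) = Σ_{j<g} Rot_row^{jb}(Σ_{i<b} A_{i,j,ℓ} ⊙ Rot_row^i(τ^{ℓ+1}(B)))`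
whenever `g·b = d`. -/
theorem bsgs_pcmm (d g b : ℕ) [NeZero d] (hg : 0 < g) (hb : 0 < b)
    (hgb : g * b = d) (ℓ : ℕ) (A B : Matrix (ZMod d) (ZMod d) ℝ) :
    (tau d)^[ℓ] (A * B) = ∑ j ∈ Finset.range g,
      RotRow d ((j : ℤ) * b)
        (∑ i ∈ Finset.range b,
          Matrix.hadamard (ptA d b A i j ℓ) (RotRow d (i : ℤ) ((tau d)^[ℓ + 1] B))) := by
  ext r c
  rw [tau_iter, Matrix.mul_apply]
  set F : ZMod d → ℝ := fun k => A (r + ℓ * c) k * B k c with hF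
  have h1 : ∑ k, F k = ∑ s ∈ Finset.range (g * b), F ((s : ZMod d) + (r + (ℓ + 1) * c)) := by
    rw [hgb, sum_zmod d (fun k => F (k + (r + (ℓ + 1) * c)))]
    exact (Equiv.sum_comp (Equiv.addRight (r + (ℓ + 1) * c)) F).symm
  rw [h1, ← sum_block (fun s => F ((s : ZMod d) + (r + (ℓ + 1) * c))), Matrix.sum_apply]
  refine Finset.sum_congr rfl fun j _ => ?_
  simp only [RotRow]
  rw [Matrix.sum_apply]
  refine Finset.sum_congr rfl fun i _ => ?_
  rw [Matrix.hadamard_apply]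
  simp only [ptA, RotRow, RotCol, hF, tau_iter, sigma]
  push_cast
  congr 2 <;> ring
end

section
/- Let P ∈ ℝ[X] be a polynomial of even degree d with positive leading coefficient. Then there exist polynomials U, V ∈ ℝ[X] of degree at most d/2 and a real scalar m such that P(x) = U(x)² + V(x)² − m for all x ∈ ℝ. -/
open Polynomial

theorem sos_of_pos (n : ℕ) : ∀ Q : Polynomial ℝ, Q.natDegree ≤ n → (∀ x : ℝ, 0 < Q.eval x) →
    ∃ U V : Polynomial ℝ, Q = U ^ 2 + V ^ 2 := by
  induction n using Nat.strong_induction_on with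
  | _ n ih =>
    intro Q hn hQ
    by_cases h0 : Q.natDegree = 0
    · rw [natDegree_eq_zero] at h0
      obtain ⟨c, rfl⟩ := h0
      have hc : 0 < c := by simpa using hQ 0
      refine ⟨C (Real.sqrt c), 0, ?_⟩
      rw [← C_pow, Real.sq_sqrt hc.le]
      simp
    · have hd : (Q.map (algebraMap ℝ ℂ)).degree ≠ 0 := by
        rw [degree_map]
        intro h
        exact h0 (natDegree_eq_of_degree_eq_some h)
      obtain ⟨z, hz⟩ := IsAlgClosed.exists_root _ hd
      have hz' : aeval z Q = 0 := by
        rw [IsRoot.def, eval_map_algebraMap] at hz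
        exact hz
      have him : z.im ≠ 0 := by
        intro him
        have hzr : z = ((z.re : ℝ) : ℂ) := by
          apply Complex.ext <;> simp [him]
        rw [hzr, ← Complex.coe_algebraMap, aeval_algebraMap_apply] at hz'
        have h2 : Q.eval z.re = 0 := by
          simpa using hz'
        exact (hQ z.re).ne' h2
      obtain ⟨R, hR⟩ := Polynomial.quadratic_dvd_of_aeval_eq_zero_im_ne_zero Q hz' him
      have hq : (X ^ 2 - C (2 * z.re) * X + C (‖z‖ ^ 2) : ℝ[X])
          = (X - C z.re) ^ 2 + (C z.im) ^ 2 := by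
        rw [Complex.sq_norm, Complex.normSq_apply]
        simp only [C_mul, C_add]
        have : (C (2 : ℝ) : ℝ[X]) = 2 := rfl
        rw [this]
        ring
      rw [hq] at hR
      have hRpos : ∀ x : ℝ, 0 < R.eval x := by
        intro x
        have h1 := hQ x
        rw [hR, eval_mul] at h1
        refine (pos_iff_pos_of_mul_pos h1).1 ?_
        simp only [eval_add, eval_pow, eval_sub, eval_X, eval_C]
        have := sq_pos_of_ne_zero him
        positivity
      have hR0 : R ≠ 0 := by
        rintro rfl
        simpa using hRpos 0
      have hqd : ((X - C z.re) ^ 2 + (C z.im) ^ 2 : ℝ[X]).natDegree = 2 := by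
        rw [← C_pow, natDegree_add_C, natDegree_pow, natDegree_X_sub_C]
      have hq0 : ((X - C z.re) ^ 2 + (C z.im) ^ 2 : ℝ[X]) ≠ 0 := by
        intro h
        rw [h] at hqd
        simp at hqd
      have hdeg : Q.natDegree = 2 + R.natDegree := by
        rw [hR, natDegree_mul hq0 hR0, hqd]
      obtain ⟨U, V, hUV⟩ := ih (n - 1) (by omega) R (by omega) hRpos
      refine ⟨(X - C z.re) * U - C z.im * V, (X - C z.re) * V + C z.im * U, ?_⟩
      rw [hR, hUV]
      ring

theorem bound_deg (U V : Polynomial ℝ) :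
    2 * max U.natDegree V.natDegree ≤ (U ^ 2 + V ^ 2).natDegree := by
  set N := max U.natDegree V.natDegree with hN
  by_cases h0 : N = 0
  · simp [h0]
  apply le_natDegree_of_ne_zero
  rw [coeff_add, coeff_pow_of_natDegree_le (le_max_left _ _),
    coeff_pow_of_natDegree_le (le_max_right _ _), ← hN]
  intro h
  have hU : U.coeff N = 0 := by nlinarith [sq_nonneg (U.coeff N), sq_nonneg (V.coeff N)]
  have hV : V.coeff N = 0 := by nlinarith [sq_nonneg (U.coeff N), sq_nonneg (V.coeff N)]
  rcases max_choice U.natDegree V.natDegree with h1 | h1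
  · rw [hN, h1, coeff_natDegree, leadingCoeff_eq_zero] at hU
    rw [← hN, hU] at h1
    exact h0 (by simpa using h1)
  · rw [hN, h1, coeff_natDegree, leadingCoeff_eq_zero] at hV
    rw [← hN, hV] at h1
    exact h0 (by simpa using h1)

theorem exists_shift (P : Polynomial ℝ) (hdeg : Even P.natDegree)
    (hlead : 0 < P.leadingCoeff) : ∃ m : ℝ, ∀ x : ℝ, 0 < P.eval x + m := by
  by_cases h0 : P.natDegree = 0
  · rw [natDegree_eq_zero] at h0
    obtain ⟨c, rfl⟩ := h0
    refine ⟨0, fun x => ?_⟩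
    simpa using hlead
  have h1 : Filter.Tendsto (fun x => P.eval x) Filter.atTop Filter.atTop :=
    P.tendsto_atTop_of_leadingCoeff_nonneg (natDegree_pos_iff_degree_pos.1 (by omega)) hlead.le
  have hnd : (P.comp (-X)).natDegree = P.natDegree := by
    rw [natDegree_comp, natDegree_neg, natDegree_X, mul_one]
  have h2 : Filter.Tendsto (fun x => (P.comp (-X)).eval x) Filter.atTop Filter.atTop := by
    apply Polynomial.tendsto_atTop_of_leadingCoeff_nonneg
    · exact natDegree_pos_iff_degree_pos.1 (by omega)
    · rw [leadingCoeff_comp (by simp)]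
      simp [hdeg.neg_one_pow, hlead.le]
  have h3 : Filter.Tendsto (fun x => P.eval x) Filter.atBot Filter.atTop := by
    have := h2.comp Filter.tendsto_neg_atBot_atTop
    simpa [Function.comp_def] using this
  have h4 : Filter.Tendsto (fun x => P.eval x) (Filter.cocompact ℝ) Filter.atTop := by
    rw [cocompact_eq_atBot_atTop]
    exact h3.sup h1
  obtain ⟨x0, hx0⟩ := P.continuous.exists_forall_le h4
  refine ⟨1 - P.eval x0, fun x => ?_⟩
  have := hx0 x
  linarith

/-- A real polynomial of even degree with positive leading coefficient can be
written as `U² + V² − m` with `deg U, deg V ≤ d/2`. -/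
theorem sos_minus_const (P : Polynomial ℝ) (hdeg : Even P.natDegree)
    (hlead : 0 < P.leadingCoeff) :
    ∃ (U V : Polynomial ℝ) (m : ℝ),
      U.natDegree ≤ P.natDegree / 2 ∧ V.natDegree ≤ P.natDegree / 2 ∧
      ∀ x : ℝ, P.eval x = (U.eval x) ^ 2 + (V.eval x) ^ 2 - m := by
  obtain ⟨m, hm⟩ := exists_shift P hdeg hlead
  obtain ⟨U, V, hUV⟩ := sos_of_pos _ (P + C m) le_rfl (fun x => by simpa using hm x)
  have hb := bound_deg U V
  rw [← hUV, natDegree_add_C] at hb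
  have h1 := le_max_left U.natDegree V.natDegree
  have h2 := le_max_right U.natDegree V.natDegree
  refine ⟨U, V, m, by omega, by omega, fun x => ?_⟩
  have := congrArg (eval x) hUV
  simp only [eval_add, eval_pow, eval_C] at this
  linarith
end

section
/- Every polynomial P ∈ ℝ[X] taking only non-negative values on ℝ (i.e. P(x) ≥ 0 for all x ∈ ℝ) can be written as a sum of two squares of real polynomials: there exist U, V ∈ ℝ[X] with P = U² + V². -/
open Polynomial

lemma aux_right (R : Polynomial ℝ) (a : ℝ) (h : ∀ x, a < x → 0 ≤ R.eval x) : 0 ≤ R.eval a := by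
  have ht : Filter.Tendsto (fun x => R.eval x) (nhdsWithin a (Set.Ioi a)) (nhds (R.eval a)) :=
    (R.continuous.tendsto a).mono_left nhdsWithin_le_nhds
  refine ge_of_tendsto ht ?_
  filter_upwards [self_mem_nhdsWithin] with x hx using h x hx

lemma aux_left (R : Polynomial ℝ) (a : ℝ) (h : ∀ x, x < a → R.eval x ≤ 0) : R.eval a ≤ 0 := by
  have ht : Filter.Tendsto (fun x => R.eval x) (nhdsWithin a (Set.Iio a)) (nhds (R.eval a)) :=
    (R.continuous.tendsto a).mono_left nhdsWithin_le_nhds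
  refine le_of_tendsto ht ?_
  filter_upwards [self_mem_nhdsWithin] with x hx using h x hx

lemma aux_main (n : ℕ) : ∀ P : Polynomial ℝ, P.natDegree = n → (∀ x : ℝ, 0 ≤ P.eval x) →
    ∃ U V : Polynomial ℝ, P = U ^ 2 + V ^ 2 := by
  induction n using Nat.strong_induction_on with
  | _ n ih =>
  intro P hn h
  by_cases h0 : P.natDegree = 0
  · obtain ⟨c, rfl⟩ := natDegree_eq_zero.1 h0
    have hc : 0 ≤ c := by simpa using h 0
    refine ⟨C (Real.sqrt c), 0, ?_⟩
    rw [← C_pow, Real.sq_sqrt hc]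
    simp
  have hP : P ≠ 0 := by rintro rfl; simp at h0
  obtain ⟨z, hz⟩ : ∃ z : ℂ, aeval z P = 0 :=
    IsAlgClosed.exists_aeval_eq_zero _ P (fun hd => h0 (natDegree_eq_of_degree_eq_some hd))
  by_cases him : z.im = 0
  · have hroot : P.IsRoot z.re := by
      have hzr : z = algebraMap ℝ ℂ z.re := by
        apply Complex.ext <;> simp [him]
      rw [hzr, aeval_algebraMap_apply] at hz
      simpa using hz
    obtain ⟨Q, hQ⟩ := dvd_iff_isRoot.2 hroot
    generalize z.re = a at *
    have hev : ∀ x, 0 ≤ (x - a) * Q.eval x := fun x => by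
      have := h x
      rw [hQ] at this
      simpa using this
    have hQa : Q.IsRoot a := by
      apply le_antisymm
      · exact aux_left Q a fun x hx => by
          by_contra! hc
          nlinarith [hev x, mul_pos (sub_pos.2 hx) hc]
      · exact aux_right Q a fun x hx => nonneg_of_mul_nonneg_right (hev x) (sub_pos.2 hx)
    obtain ⟨R, hR⟩ := dvd_iff_isRoot.2 hQa
    have hPR : P = (X - C a) ^ 2 * R := by rw [hQ, hR]; ring
    have hR0 : R ≠ 0 := by rintro rfl; simp at hPR; exact hP hPR
    have hRne : ∀ x, x ≠ a → 0 ≤ R.eval x := fun x hx => by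
      have h1 := h x
      rw [hPR] at h1
      simp only [eval_mul, eval_pow, eval_sub, eval_X, eval_C] at h1
      exact nonneg_of_mul_nonneg_right h1 (by have := sub_ne_zero.2 hx; positivity)
    have hRnn : ∀ x, 0 ≤ R.eval x := fun x => by
      by_cases hx : x = a
      · subst hx
        exact aux_right R x fun y hy => hRne y hy.ne'
      · exact hRne x hx
    have hdeg : R.natDegree < n := by
      rw [← hn, hPR, natDegree_mul (pow_ne_zero _ (X_sub_C_ne_zero a)) hR0, natDegree_pow,
        natDegree_X_sub_C]
      omega
    obtain ⟨U, V, hUV⟩ := ih _ hdeg R rfl hRnn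
    exact ⟨(X - C a) * U, (X - C a) * V, by rw [hPR, hUV]; ring⟩
  · obtain ⟨R, hR⟩ := P.quadratic_dvd_of_aeval_eq_zero_im_ne_zero hz him
    have hq : X ^ 2 - C (2 * z.re) * X + C (‖z‖ ^ 2) = (X - C z.re) ^ 2 + C z.im ^ 2 := by
      rw [Complex.sq_norm, Complex.normSq_apply]
      simp only [map_mul, map_add, C_ofNat]
      ring
    rw [hq] at hR
    have hR0 : R ≠ 0 := by rintro rfl; simp at hR; exact hP hR
    have hRnn : ∀ x, 0 ≤ R.eval x := fun x => by
      have h1 := h x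
      rw [hR] at h1
      simp only [eval_mul, eval_add, eval_pow, eval_sub, eval_X, eval_C] at h1
      exact nonneg_of_mul_nonneg_right h1 (by positivity)
    have hqd : ((X - C z.re) ^ 2 + C z.im ^ 2 : ℝ[X]).natDegree = 2 := by
      rw [← C_pow, natDegree_add_C, natDegree_pow, natDegree_X_sub_C]
    have hdeg : R.natDegree < n := by
      rw [← hn, hR, natDegree_mul (by intro h'; rw [h'] at hqd; simp at hqd) hR0, hqd]
      omega
    obtain ⟨U, V, hUV⟩ := ih _ hdeg R rfl hRnn
    exact ⟨(X - C z.re) * U - C z.im * V, (X - C z.re) * V + C z.im * U, by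
      rw [hR, hUV]; ring⟩

/-- Every real polynomial taking only non-negative values on `ℝ` is a sum of
two squares of real polynomials. -/
theorem nonneg_poly_sum_two_squares (P : Polynomial ℝ)
    (h : ∀ x : ℝ, 0 ≤ P.eval x) :
    ∃ U V : Polynomial ℝ, P = U ^ 2 + V ^ 2 := by
  exact aux_main _ P rfl h
end
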